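/- Let I be a nonempty finite index set of players, let A be a convex subset of a real vector space, let each w_i : A → ℝ be concave on A, and let d_i ∈ ℝ. Suppose a, b ∈ A both satisfy w_i(a) > d_i and w_i(b) > d_i for all i, and both maximize the function a ↦ ∑_{i∈I} log(w_i(a) − d_i) over the set S = {x ∈ A : w_i(x) > d_i for all i}. Then w_i(a) = w_i(b) for every i ∈ I. -/

import Mathlib

/-- Uniqueness of the bargained payoff allocation: with concave payoffs over a convex
decision set, any two strictly feasible maximizers of ∑ᵢ log(wᵢ(·) − dᵢ) over the
strictly feasible set yield identical payoffs for every player. -/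
theorem nbs_payoff_uniqueness
    {I : Type*} [Fintype I] [Nonempty I] {V : Type*} [AddCommGroup V] [Module ℝ V]
    (A : Set V) (hA : Convex ℝ A) (w : I → V → ℝ) (hw : ∀ i, ConcaveOn ℝ A (w i))
    (d : I → ℝ) (a b : V) (haA : a ∈ A) (hbA : b ∈ A)
    (ha : ∀ i, d i < w i a) (hb : ∀ i, d i < w i b)
    (hamax : ∀ x ∈ A, (∀ i, d i < w i x) →
      ∑ i, Real.log (w i x - d i) ≤ ∑ i, Real.log (w i a - d i))
    (hbmax : ∀ x ∈ A, (∀ i, d i < w i x) →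
      ∑ i, Real.log (w i x - d i) ≤ ∑ i, Real.log (w i b - d i)) :
    ∀ i, w i a = w i b := by
  intro j
  by_contra hne
  set m : V := (1 / 2 : ℝ) • a + (1 / 2 : ℝ) • b with hm
  have hmA : m ∈ A := hA haA hbA (by norm_num) (by norm_num) (by norm_num)
  have hmid : ∀ i, 1 / 2 * w i a + 1 / 2 * w i b ≤ w i m := by
    intro i
    have h := (hw i).2 haA hbA (by norm_num : (0 : ℝ) ≤ 1 / 2)
      (by norm_num : (0 : ℝ) ≤ 1 / 2) (by norm_num)
    simpa only [smul_eq_mul] using h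
  have hmd : ∀ i, d i < w i m := by
    intro i
    linarith [hmid i, ha i, hb i]
  have hmono : ∀ i, Real.log (1 / 2 * (w i a - d i) + 1 / 2 * (w i b - d i))
      ≤ Real.log (w i m - d i) := by
    intro i
    apply Real.log_le_log
    · linarith [ha i, hb i]
    · linarith [hmid i]
  have hle : ∀ i, 1 / 2 * Real.log (w i a - d i) + 1 / 2 * Real.log (w i b - d i)
      ≤ Real.log (w i m - d i) := by
    intro i
    have h := strictConcaveOn_log_Ioi.concaveOn.2 (Set.mem_Ioi.2 (sub_pos.2 (ha i)))
      (Set.mem_Ioi.2 (sub_pos.2 (hb i))) (by norm_num : (0 : ℝ) ≤ 1 / 2)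
      (by norm_num : (0 : ℝ) ≤ 1 / 2) (by norm_num)
    simp only [smul_eq_mul] at h
    exact h.trans (hmono i)
  have hlt : 1 / 2 * Real.log (w j a - d j) + 1 / 2 * Real.log (w j b - d j)
      < Real.log (w j m - d j) := by
    have h := strictConcaveOn_log_Ioi.2 (Set.mem_Ioi.2 (sub_pos.2 (ha j)))
      (Set.mem_Ioi.2 (sub_pos.2 (hb j))) (fun h => hne (by linarith))
      (by norm_num : (0 : ℝ) < 1 / 2) (by norm_num : (0 : ℝ) < 1 / 2) (by norm_num)
    simp only [smul_eq_mul] at h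
    exact h.trans_le (hmono j)
  have hsum := Finset.sum_lt_sum (fun i _ => hle i) ⟨j, Finset.mem_univ j, hlt⟩
  rw [Finset.sum_add_distrib, ← Finset.mul_sum, ← Finset.mul_sum] at hsum
  linarith [hamax m hmA hmd, hbmax m hmA hmd]
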